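/- Let 0 < α < 1. There exists a constant C > 0 such that for every Schwartz vector field u : ℝ³ → ℝ³ with div u = 0 and vorticity ω = curl u, |∫_{ℝ³} ((ω·∇)u) · ω dx| ≤ C (‖∇ω‖_{L²}^{1+α} ‖ω‖_{L²}^{1−α} ‖ω‖_{Ḃ^{−1−α}_{∞,∞}} + ‖∇ω‖_{L²}^{α} ‖ω‖_{L²}^{2−α} ‖ω‖_{Ḃ^{−α}_{∞,∞}}), the inequality holding in [0,∞]. -/

import Mathlib

open MeasureTheory Real Complex Filter Function
open scoped ENNReal FourierTransform SchwartzMap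

noncomputable section

/-- The properties of the radial smooth cutoff `χ` used to build the
Littlewood–Paley decomposition: smooth, compactly supported, radial,
`0 ≤ χ ≤ 1`, `χ = 1` on `{‖ξ‖ ≤ 3/4}` and `χ = 0` on `{‖ξ‖ > 4/3}`. -/
def IsLPCutoff {n : ℕ} (χ : EuclideanSpace ℝ (Fin n) → ℝ) : Prop :=
  ContDiff ℝ ((⊤ : ℕ∞) : WithTop ℕ∞) χ ∧ HasCompactSupport χ ∧
    (∀ ξ η, ‖ξ‖ = ‖η‖ → χ ξ = χ η) ∧ (∀ ξ, 0 ≤ χ ξ) ∧ (∀ ξ, χ ξ ≤ 1) ∧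
    (∀ ξ, ‖ξ‖ ≤ 3 / 4 → χ ξ = 1) ∧ (∀ ξ, 4 / 3 < ‖ξ‖ → χ ξ = 0)

/-- The low-frequency Littlewood–Paley projection `S_j f = 𝓕⁻¹(χ(·/2^j) 𝓕 f)`. -/
def Sproj {n : ℕ} (χ : EuclideanSpace ℝ (Fin n) → ℝ) (j : ℤ)
    (f : EuclideanSpace ℝ (Fin n) → ℂ) : EuclideanSpace ℝ (Fin n) → ℂ :=
  𝓕⁻ fun ξ => ((χ ((2 : ℝ) ^ (-j) • ξ) : ℝ) : ℂ) * 𝓕 f ξ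

/-- The Littlewood–Paley block `Δ_j f = 𝓕⁻¹(φ̂(·/2^j) 𝓕 f)`, where
`φ̂(ξ) = χ(ξ/2) - χ(ξ)`, i.e. `φ̂(ξ/2^j) = χ(ξ/2^(j+1)) - χ(ξ/2^j)`. -/
def Dproj {n : ℕ} (χ : EuclideanSpace ℝ (Fin n) → ℝ) (j : ℤ)
    (f : EuclideanSpace ℝ (Fin n) → ℂ) : EuclideanSpace ℝ (Fin n) → ℂ :=
  𝓕⁻ fun ξ => ((χ ((2 : ℝ) ^ (-(j + 1)) • ξ) - χ ((2 : ℝ) ^ (-j) • ξ) : ℝ) : ℂ) * 𝓕 f ξ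

/-- The `ℓ^q(ℤ)` norm of a sequence of extended nonnegative reals, with the usual
supremum modification for `q = ∞`. -/
def lqNorm (q : ℝ≥0∞) (a : ℤ → ℝ≥0∞) : ℝ≥0∞ :=
  if q = ∞ then ⨆ j, a j else (∑' j, a j ^ q.toReal) ^ (1 / q.toReal)

/-- The homogeneous Besov norm `‖f‖_{Ḃ^s_{p,q}}`, valued in `[0,∞]`. -/
def besovNorm {n : ℕ} (χ : EuclideanSpace ℝ (Fin n) → ℝ) (s : ℝ) (p q : ℝ≥0∞)
    (f : EuclideanSpace ℝ (Fin n) → ℂ) : ℝ≥0∞ :=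
  lqNorm q fun j => (2 : ℝ≥0∞) ^ ((j : ℝ) * s) * eLpNorm (Dproj χ j f) p volume
noncomputable section

/-- Abbreviation for the Euclidean space `ℝ³`. -/
abbrev E3 := EuclideanSpace ℝ (Fin 3)

/-- The partial derivative `∂ᵢ f` in the `i`-th coordinate direction. -/
def pd (i : Fin 3) (f : E3 → ℝ) : E3 → ℝ :=
  fun x => fderiv ℝ f x (EuclideanSpace.single i 1)

/-- The curl `∇ × u = (∂₂u³ - ∂₃u², ∂₃u¹ - ∂₁u³, ∂₁u² - ∂₂u¹)` of a vector field on `ℝ³`. -/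
def curl3 (u : Fin 3 → E3 → ℝ) : Fin 3 → E3 → ℝ :=
  ![fun x => pd 1 (u 2) x - pd 2 (u 1) x,
    fun x => pd 2 (u 0) x - pd 0 (u 2) x,
    fun x => pd 0 (u 1) x - pd 1 (u 0) x]

/-- The curl of a Schwartz vector field on `ℝ³`. -/
def curlS (u : Fin 3 → 𝓢(E3, ℝ)) : Fin 3 → E3 → ℝ :=
  curl3 fun i => ⇑(u i)

/-- The `L²` norm of a vector field (the `ℓ²` combination of the componentwise norms),
valued in `[0,∞]`. -/
def vecL2 (v : Fin 3 → E3 → ℝ) : ℝ≥0∞ :=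
  (∑ i : Fin 3, eLpNorm (v i) 2 volume ^ (2 : ℝ)) ^ (1 / 2 : ℝ)

/-- The `L²` norm `‖∇v‖_{L²}` of the gradient of a vector field,
`‖∇v‖_{L²}² = Σ_{i,j} ‖∂ᵢ vʲ‖_{L²}²`, valued in `[0,∞]`. -/
def gradL2 (v : Fin 3 → E3 → ℝ) : ℝ≥0∞ :=
  (∑ i : Fin 3, ∑ j : Fin 3, eLpNorm (pd i (v j)) 2 volume ^ (2 : ℝ)) ^ (1 / 2 : ℝ)

/-- The homogeneous Besov norm `‖v‖_{Ḃ^s_{∞,∞}} = sup_j 2^{js} ‖Δ_j v‖_{L^∞}` of a real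
vector field on `ℝ³`, taken as the maximum (supremum) over the components. -/
def vecBesovInf (χ : E3 → ℝ) (s : ℝ) (v : Fin 3 → E3 → ℝ) : ℝ≥0∞ :=
  ⨆ i : Fin 3, ⨆ j : ℤ,
    (2 : ℝ≥0∞) ^ ((j : ℝ) * s) * eLpNorm (Dproj χ j fun x => ((v i x : ℝ) : ℂ)) ⊤ volume

/-- The homogeneous Besov norm `Ḃ^s_{2,2}` of a 3×3-matrix field, as the `ℓ²`
combination of the componentwise Besov norms. -/
def matBesov22 (χ : E3 → ℝ) (s : ℝ) (m : Fin 3 → Fin 3 → E3 → ℝ) : ℝ≥0∞ :=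
  (∑ i : Fin 3, ∑ j : Fin 3,
      besovNorm χ s 2 2 (fun x => ((m i j x : ℝ) : ℂ)) ^ (2 : ℝ)) ^ (1 / 2 : ℝ)

/-- The `L²` norm of `Λ^α v`, where `Λ^α f = 𝓕⁻¹(|ξ|^α 𝓕 f)` acts componentwise on the
real vector field `v`, taken as the `ℓ²` combination of the componentwise norms. -/
def vecFracLapL2 (α : ℝ) (v : Fin 3 → E3 → ℝ) : ℝ≥0∞ :=
  (∑ i : Fin 3,
      eLpNorm (𝓕⁻ fun ξ => ((‖ξ‖ ^ α : ℝ) : ℂ) * 𝓕 (fun x => ((v i x : ℝ) : ℂ)) ξ) 2 volume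
        ^ (2 : ℝ)) ^ (1 / 2 : ℝ)

/-- The vortex-stretching integral `∫ ((ω·∇)u)·ω dx` of a Schwartz vector field `u`
with vorticity `ω = curl u`. -/
def vortexStretch (u : Fin 3 → 𝓢(E3, ℝ)) : ℝ :=
  ∫ x, ∑ j : Fin 3, (∑ i : Fin 3, curlS u i x * pd i (⇑(u j)) x) * curlS u j x

/-- Plancherel's identity for Schwartz functions, in terms of lower Lebesgue integrals. -/
theorem lintegral_enorm_fourier_sq (f : 𝓢(E3, ℂ)) :
    ∫⁻ ξ, ‖𝓕 f ξ‖ₑ ^ 2 = ∫⁻ x, ‖f x‖ₑ ^ 2 := by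
  have key : ∀ g : 𝓢(E3, ℂ), ∫⁻ x, ‖g x‖ₑ ^ 2 = ENNReal.ofReal (∫ x, ‖g x‖ ^ 2) := by
    intro g
    have hi : Integrable fun x => ‖g x‖ ^ 2 :=
      MemLp.integrable_norm_pow (p := 2) (by simpa using g.memLp 2) two_ne_zero
    rw [ofReal_integral_eq_lintegral_ofReal hi
      (Eventually.of_forall fun x => by positivity)]
    refine lintegral_congr fun x => ?_
    rw [ENNReal.ofReal_pow (norm_nonneg _), ofReal_norm]
  rw [key, key, SchwartzMap.integral_norm_sq_fourier]

/-- An inverse Fourier integral whose symbol carries the dilated factor `𝓕 k (t • ·)` is an average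
of translates of the inverse Fourier integral without that factor. -/
theorem fourierInv_dilated_fourier_mul {k G : E3 → ℂ} (hk : Integrable k) (hG : Integrable G)
    (t : ℝ) (x : E3) :
    𝓕⁻ (fun ξ => 𝓕 k (t • ξ) * G ξ) x = ∫ y, k y * 𝓕⁻ G (x - t • y) := by
  have hprod : Integrable (Function.uncurry fun ξ y : E3 =>
      (Real.fourierChar (inner ℝ ξ (x - t • y)) : ℂ) * (G ξ * k y)) (volume.prod volume) := by
    refine (hG.mul_prod hk).bdd_mul (c := 1) ?_ ?_
    · refine Continuous.aestronglyMeasurable ?_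
      fun_prop
    · exact Eventually.of_forall fun z => (Circle.norm_coe _).le
  calc 𝓕⁻ (fun ξ => 𝓕 k (t • ξ) * G ξ) x
      = ∫ ξ, ∫ y, (Real.fourierChar (inner ℝ ξ (x - t • y)) : ℂ) * (G ξ * k y) := by
        rw [Real.fourierInv_eq]
        refine integral_congr_ae (Eventually.of_forall fun ξ => ?_)
        simp only [Real.fourier_eq, Circle.smul_def, smul_eq_mul]
        rw [← integral_mul_const, ← integral_const_mul]
        refine integral_congr_ae (Eventually.of_forall fun y => ?_)
        have he : inner ℝ ξ (x - t • y) = inner ℝ ξ x + -inner ℝ y (t • ξ) := by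
          rw [inner_sub_right, inner_smul_right, inner_smul_right, real_inner_comm y ξ, sub_eq_add_neg]
        simp only [he, AddChar.map_add_eq_mul, Circle.coe_mul]
        ring
    _ = ∫ y, ∫ ξ, (Real.fourierChar (inner ℝ ξ (x - t • y)) : ℂ) * (G ξ * k y) :=
        integral_integral_swap hprod
    _ = ∫ y, k y * 𝓕⁻ G (x - t • y) := by
        refine integral_congr_ae (Eventually.of_forall fun y => ?_)
        simp only [Real.fourierInv_eq, Circle.smul_def, smul_eq_mul]
        rw [← integral_const_mul]
        refine integral_congr_ae (Eventually.of_forall fun ξ => ?_)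
        simp only
        ring

/-- Dilated `L¹` convolution kernels are bounded on `L^∞`, uniformly in the dilation. -/
theorem norm_fourierInv_dilated_fourier_mul_le {k G : E3 → ℂ} (hk : Integrable k)
    (hG : Integrable G) (t : ℝ) {A : ℝ} (hA : ∀ x, ‖𝓕⁻ G x‖ ≤ A) (x : E3) :
    ‖𝓕⁻ (fun ξ => 𝓕 k (t • ξ) * G ξ) x‖ ≤ (∫ y, ‖k y‖) * A := by
  rw [fourierInv_dilated_fourier_mul hk hG, ← integral_mul_const]
  refine norm_integral_le_of_norm_le (hk.norm.mul_const A) (Eventually.of_forall fun y => ?_)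
  rw [norm_mul]
  gcongr
  exact hA _

/-- The complexification of a real Schwartz function. -/
def complexify (f : 𝓢(E3, ℝ)) : 𝓢(E3, ℂ) :=
  SchwartzMap.bilinLeftCLM (ContinuousLinearMap.lsmul ℝ ℝ : ℝ →L[ℝ] ℂ →L[ℝ] ℂ)
    (Function.HasTemperateGrowth.const (1 : ℂ)) f

theorem complexify_apply (f : 𝓢(E3, ℝ)) (x : E3) : complexify f x = (f x : ℂ) := by
  simp [complexify]

open LineDeriv in
theorem lineDerivOp_complexify (m : E3) (f : 𝓢(E3, ℝ)) :
    ∂_{m} (complexify f) = complexify (∂_{m} f) := by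
  ext x
  rw [complexify_apply, SchwartzMap.lineDerivOp_apply_eq_fderiv,
    SchwartzMap.lineDerivOp_apply_eq_fderiv]
  have h : (complexify f : E3 → ℂ) = fun x => Complex.ofRealCLM (f x) :=
    funext fun x => complexify_apply f x
  rw [h]
  have := (Complex.ofRealCLM.hasFDerivAt (x := f x)).comp x (f.differentiableAt.hasFDerivAt (x := x))
  exact congrArg (fun L : E3 →L[ℝ] ℂ => L m) this.fderiv

open LineDeriv in
theorem fourier_lineDerivOp_apply (m : E3) (f : 𝓢(E3, ℂ)) (ξ : E3) :
    𝓕 (∂_{m} f) ξ = 2 * π * Complex.I * (inner ℝ ξ m : ℝ) * 𝓕 f ξ := by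
  rw [SchwartzMap.fourier_lineDerivOp_eq]
  have h : (inner ℝ · m : E3 → ℝ).HasTemperateGrowth := by fun_prop
  rw [smul_apply, SchwartzMap.smulLeftCLM_apply_apply h]
  simp [mul_assoc]

theorem schwartz_fourier_sub (f g : 𝓢(E3, ℂ)) : 𝓕 (f - g) = 𝓕 f - 𝓕 g :=
  map_sub (FourierTransform.fourierCLM ℂ 𝓢(E3, ℂ)) f g

theorem schwartz_fourierInv_sub (f g : 𝓢(E3, ℂ)) : 𝓕⁻ (f - g) = 𝓕⁻ f - 𝓕⁻ g :=
  map_sub (FourierTransform.fourierInvCLM ℂ 𝓢(E3, ℂ)) f g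

theorem IsLPCutoff.hasTemperateGrowth_dilate {χ : E3 → ℝ} (hχ : IsLPCutoff χ) (t : ℝ) :
    (fun ξ : E3 => ((χ (t • ξ) : ℝ) : ℂ)).HasTemperateGrowth := by
  have h1 : χ.HasTemperateGrowth := hχ.2.1.hasTemperateGrowth hχ.1
  have h2 : (fun ξ : E3 => t • ξ).HasTemperateGrowth :=
    (t • ContinuousLinearMap.id ℝ E3).hasTemperateGrowth
  exact Complex.hasTemperateGrowth_ofReal.comp (h1.comp h2)

/-- The Fourier transform of `S_j f` as a Schwartz function. -/
def lowFreq (χ : E3 → ℝ) (j : ℤ) (f : 𝓢(E3, ℂ)) : 𝓢(E3, ℂ) :=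
  SchwartzMap.smulLeftCLM ℂ (fun ξ : E3 => ((χ ((2 : ℝ) ^ (-j) • ξ) : ℝ) : ℂ)) (𝓕 f)

theorem lowFreq_apply {χ : E3 → ℝ} (hχ : IsLPCutoff χ) (j : ℤ) (f : 𝓢(E3, ℂ)) (ξ : E3) :
    lowFreq χ j f ξ = ((χ ((2 : ℝ) ^ (-j) • ξ) : ℝ) : ℂ) * 𝓕 f ξ := by
  rw [lowFreq, SchwartzMap.smulLeftCLM_apply_apply (hχ.hasTemperateGrowth_dilate _), smul_eq_mul]

theorem Sproj_eq_fourierInv {χ : E3 → ℝ} (hχ : IsLPCutoff χ) (j : ℤ) (f : 𝓢(E3, ℂ)) :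
    Sproj χ j f = ⇑(𝓕⁻ (lowFreq χ j f) : 𝓢(E3, ℂ)) := by
  rw [SchwartzMap.fourierInv_coe, Sproj]
  congr 1
  funext ξ
  rw [lowFreq_apply hχ, SchwartzMap.fourier_coe]

theorem Dproj_eq_fourierInv {χ : E3 → ℝ} (hχ : IsLPCutoff χ) (j : ℤ) (f : 𝓢(E3, ℂ)) :
    Dproj χ j f = ⇑(𝓕⁻ (lowFreq χ (j + 1) f - lowFreq χ j f) : 𝓢(E3, ℂ)) := by
  rw [SchwartzMap.fourierInv_coe, Dproj]
  congr 1
  funext ξ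
  rw [sub_apply, lowFreq_apply hχ, lowFreq_apply hχ, SchwartzMap.fourier_coe]
  push_cast
  ring

theorem Sproj_add_one {χ : E3 → ℝ} (hχ : IsLPCutoff χ) (j : ℤ) (f : 𝓢(E3, ℂ)) (x : E3) :
    Sproj χ (j + 1) f x = Sproj χ j f x + Dproj χ j f x := by
  rw [Sproj_eq_fourierInv hχ, Sproj_eq_fourierInv hχ, Dproj_eq_fourierInv hχ,
    schwartz_fourierInv_sub, sub_apply]
  ring

/-- The low-frequency projections of a Schwartz function vanish in the low-frequency limit. -/
theorem tendsto_Sproj_neg {χ : E3 → ℝ} (hχ : IsLPCutoff χ) (f : 𝓢(E3, ℂ)) (x : E3) :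
    Tendsto (fun n : ℕ => Sproj χ (-(n : ℤ)) f x) atTop (nhds 0) := by
  simp only [Sproj, Real.fourierInv_eq]
  rw [← integral_zero E3 ℂ (μ := volume)]
  refine tendsto_integral_of_dominated_convergence (fun ξ => ‖𝓕 f ξ‖) (fun n => ?_)
    (𝓕 f).integrable.norm (fun n => Eventually.of_forall fun ξ => ?_) ?_
  · have hc : Continuous χ := hχ.1.continuous
    have hf : Continuous (𝓕 (f : E3 → ℂ)) := (𝓕 f).continuous
    refine Continuous.aestronglyMeasurable ?_
    fun_prop
  · rw [Circle.norm_smul, norm_mul, SchwartzMap.fourier_coe]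
    refine mul_le_of_le_one_left (norm_nonneg _) ?_
    rw [Complex.norm_real, Real.norm_eq_abs, abs_of_nonneg (hχ.2.2.2.1 _)]
    exact hχ.2.2.2.2.1 _
  · have hne : ∀ᵐ ξ : E3, ξ ≠ 0 := by simp [ae_iff]
    filter_upwards [hne] with ξ hξ
    have hpos : 0 < ‖ξ‖ := norm_pos_iff.2 hξ
    have ht := ((tendsto_pow_atTop_atTop_of_one_lt (one_lt_two (α := ℝ))).atTop_mul_const
      hpos).eventually_gt_atTop (4 / 3)
    refine Tendsto.congr' ?_ tendsto_const_nhds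
    filter_upwards [ht] with n hn
    rw [hχ.2.2.2.2.2.2]
    · simp
    · rw [norm_smul]
      simpa using hn

theorem norm_Sproj_le {χ : E3 → ℝ} (hχ : IsLPCutoff χ) {y b : ℝ} (hy : 1 < y) (hb : 0 < b)
    (f : 𝓢(E3, ℂ)) (hf : ∀ (j : ℤ) (x : E3), ‖Dproj χ j f x‖ ≤ y ^ j * b) (N : ℤ) (x : E3) :
    ‖Sproj χ N f x‖ ≤ (y - 1)⁻¹ * b * y ^ N := by
  have hy1 : 0 < y - 1 := by linarith
  have step : ∀ M : ℤ, ∀ N : ℤ, M ≤ N →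
      ‖Sproj χ N f x‖ ≤ (y - 1)⁻¹ * b * y ^ N + ‖Sproj χ M f x‖ := by
    intro M N hMN
    induction N, hMN using Int.leInduction with
    | base =>
      have : 0 ≤ (y - 1)⁻¹ * b * y ^ M := by positivity
      linarith
    | succ n hmn ih =>
      rw [Sproj_add_one hχ]
      refine (norm_add_le _ _).trans ?_
      have h1 : (y - 1)⁻¹ * b * y ^ (n + 1) = (y - 1)⁻¹ * b * y ^ n + y ^ n * b := by
        rw [zpow_add_one₀ (by positivity)]
        field_simp
        ring
      rw [h1]
      linarith [hf n x]
  have hlim : Tendsto (fun n : ℕ => (y - 1)⁻¹ * b * y ^ N + ‖Sproj χ (-(n : ℤ)) f x‖) atTop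
      (nhds ((y - 1)⁻¹ * b * y ^ N)) := by
    simpa using (tendsto_Sproj_neg hχ f x).norm.const_add ((y - 1)⁻¹ * b * y ^ N)
  refine ge_of_tendsto hlim ?_
  filter_upwards [eventually_ge_atTop N.natAbs] with n hn
  exact step _ _ (by omega)

/-- Only the frequencies `|ξ| ≥ 3/4 · 2^N` contribute to `f - S_N f`. -/
theorem lintegral_enorm_sub_Sproj_sq_le {χ : E3 → ℝ} (hχ : IsLPCutoff χ) (N : ℤ)
    (f : 𝓢(E3, ℂ)) :
    ∫⁻ x, ‖f x - Sproj χ N f x‖ₑ ^ 2 ≤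
      ∫⁻ ξ, (if (2 : ℝ) ^ N ≤ 4 / 3 * ‖ξ‖ then 1 else 0) * ‖𝓕 f ξ‖ₑ ^ 2 := by
  have h1 : ∀ x, f x - Sproj χ N f x = (f - 𝓕⁻ (lowFreq χ N f)) x := fun x => by
    rw [sub_apply, Sproj_eq_fourierInv hχ]
  simp_rw [h1]
  rw [← lintegral_enorm_fourier_sq, schwartz_fourier_sub,
    FourierTransform.fourier_fourierInv_eq]
  refine lintegral_mono fun ξ => ?_
  simp only [sub_apply, lowFreq_apply hχ]
  split_ifs with h
  · rw [one_mul]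
    gcongr
    rw [← one_sub_mul, enorm_mul]
    refine mul_le_of_le_one_left (by positivity) ?_
    rw [← Complex.ofReal_one, ← Complex.ofReal_sub, ← ofReal_norm, ENNReal.ofReal_le_one,
      Complex.norm_real, Real.norm_eq_abs, abs_le]
    constructor <;> linarith [hχ.2.2.2.1 ((2 : ℝ) ^ (-N) • ξ), hχ.2.2.2.2.1 ((2 : ℝ) ^ (-N) • ξ)]
  · have : χ ((2 : ℝ) ^ (-N) • ξ) = 1 := by
      apply hχ.2.2.2.2.2.1
      rw [norm_smul, zpow_neg, norm_inv, norm_zpow, Real.norm_two, inv_mul_le_iff₀ (by positivity)]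
      linarith
    rw [this]
    simp

theorem tsum_zpow_indicator_le {α : ℝ} (hα : 0 < α) {r : ℝ} (hr : 0 ≤ r) :
    ∑' N : ℤ, ENNReal.ofReal (((2 : ℝ) ^ α) ^ N) * (if (2 : ℝ) ^ N ≤ r then 1 else 0) ≤
      (∑' k : ℕ, ENNReal.ofReal (((2 : ℝ) ^ α)⁻¹) ^ k) * ENNReal.ofReal (r ^ α) := by
  rcases hr.eq_or_lt with rfl | hr
  · have : ∀ N : ℤ, ¬ (2 : ℝ) ^ N ≤ 0 := fun N => not_le.2 (by positivity)
    simp [this]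
  obtain ⟨M, hM⟩ := exists_mem_Ico_zpow hr (one_lt_two (α := ℝ))
  have hy : 0 < (2 : ℝ) ^ α := by positivity
  have hinj : Function.Injective fun k : ℕ => M - (k : ℤ) := fun a b h => by
    simp only at h; omega
  rw [← hinj.tsum_eq, ← ENNReal.tsum_mul_right]
  · refine ENNReal.tsum_le_tsum fun k => ?_
    have h1 : ((2 : ℝ) ^ α) ^ (M - (k : ℤ)) ≤ ((2 : ℝ) ^ α)⁻¹ ^ k * r ^ α := by
      rw [zpow_sub₀ hy.ne', zpow_natCast, div_eq_mul_inv, mul_comm, inv_pow]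
      gcongr
      rw [← Real.rpow_intCast, ← Real.rpow_mul (by norm_num), mul_comm,
        Real.rpow_mul (by norm_num), Real.rpow_intCast]
      exact Real.rpow_le_rpow (by positivity) hM.1 hα.le
    calc _ ≤ ENNReal.ofReal (((2 : ℝ) ^ α) ^ (M - (k : ℤ))) * 1 := by
          gcongr
          split_ifs <;> simp
      _ ≤ ENNReal.ofReal (((2 : ℝ) ^ α)⁻¹ ^ k * r ^ α) := by
          rw [mul_one]
          exact ENNReal.ofReal_le_ofReal h1
      _ = _ := by
          rw [ENNReal.ofReal_mul (by positivity), ENNReal.ofReal_pow (by positivity)]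
  · intro N hN
    have hN' : (2 : ℝ) ^ N ≤ r := by
      by_contra h
      simp [h] at hN
    have : N < M + 1 := (zpow_lt_zpow_iff_right₀ (one_lt_two (α := ℝ))).1 (hN'.trans_lt hM.2)
    exact ⟨(M - N).toNat, by simp only; omega⟩

/-- A function whose low-frequency parts are controlled by `S y^N` has its cube dominated pointwise
by a weighted sum of squares of its high-frequency parts. -/
theorem enorm_cube_le_tsum {y c : ℝ} (hy : 1 < y) (hc : 0 < c) (v : ℂ) (s : ℤ → ℂ)
    (hs : ∀ N, ‖s N‖ ≤ c * y ^ N) :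
    ‖v‖ₑ ^ 3 ≤ ∑' N : ℤ, ENNReal.ofReal (8 * c * y) * ENNReal.ofReal (y ^ N) * ‖v - s N‖ₑ ^ 2 := by
  rcases eq_or_ne v 0 with rfl | hv
  · simp
  have hv' : 0 < ‖v‖ := norm_pos_iff.2 hv
  obtain ⟨N, hN1, hN2⟩ := exists_mem_Ico_zpow (x := ‖v‖ / (2 * c)) (by positivity) hy
  refine le_trans ?_ (ENNReal.le_tsum N)
  rw [le_div_iff₀ (by positivity)] at hN1
  rw [div_lt_iff₀ (by positivity), zpow_add_one₀ (by positivity)] at hN2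
  have hhalf : ‖v‖ ≤ 2 * ‖v - s N‖ := by
    have h1 := hs N
    have h2 := norm_sub_norm_le v (s N)
    linarith
  have hreal : ‖v‖ ^ 3 ≤ 8 * c * y * y ^ N * ‖v - s N‖ ^ 2 := by
    calc ‖v‖ ^ 3 = ‖v‖ * ‖v‖ ^ 2 := by ring
      _ ≤ (y ^ N * y * (2 * c)) * (2 * ‖v - s N‖) ^ 2 := by gcongr
      _ = _ := by ring
  have := ENNReal.ofReal_le_ofReal hreal
  rwa [ENNReal.ofReal_pow (norm_nonneg _), ENNReal.ofReal_mul (by positivity),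
    ENNReal.ofReal_mul (by positivity), ENNReal.ofReal_pow (norm_nonneg _), ofReal_norm,
    ofReal_norm] at this

/-- The refined Sobolev inequality `‖f‖_{L³}³ ≤ C ‖f‖_{Ḃ^{-α}_{∞,∞}} ‖f‖_{Ḣ^{α/2}}²`, for a positive
bound `b` on the Besov norm. -/
theorem exists_lintegral_cube_le_of_pos {χ : E3 → ℝ} (hχ : IsLPCutoff χ) {α : ℝ} (hα : 0 < α) :
    ∃ C : ℝ≥0∞, C ≠ ∞ ∧ ∀ (f : 𝓢(E3, ℂ)) (b : ℝ), 0 < b →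
      (∀ (j : ℤ) (x : E3), ‖Dproj χ j f x‖ ≤ ((2 : ℝ) ^ α) ^ j * b) →
      ∫⁻ x, ‖f x‖ₑ ^ 3 ≤
        C * (ENNReal.ofReal b * ∫⁻ ξ, ENNReal.ofReal (‖ξ‖ ^ α) * ‖𝓕 f ξ‖ₑ ^ 2) := by
  have hy : 1 < (2 : ℝ) ^ α := Real.one_lt_rpow one_lt_two hα
  set y : ℝ := (2 : ℝ) ^ α with hydef
  set G : ℝ≥0∞ := ∑' k : ℕ, ENNReal.ofReal y⁻¹ ^ k with hG
  have hGtop : G ≠ ∞ := by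
    rw [hG, ENNReal.tsum_geometric]
    refine ENNReal.inv_ne_top.2 (tsub_pos_of_lt ?_).ne'
    rw [ENNReal.ofReal_lt_one]
    exact inv_lt_one_of_one_lt₀ hy
  have hy1 : 0 < y - 1 := by linarith
  refine ⟨ENNReal.ofReal (8 * (y - 1)⁻¹ * y) * (G * ENNReal.ofReal ((4 / 3) ^ α)),
    by finiteness, fun f b hb hf => ?_⟩
  have hfc : Continuous (f : E3 → ℂ) := f.continuous
  have hFc : Continuous (𝓕 f : 𝓢(E3, ℂ)) := (𝓕 f).continuous
  calc ∫⁻ x, ‖f x‖ₑ ^ 3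
      ≤ ∫⁻ x, ∑' N : ℤ, ENNReal.ofReal (8 * ((y - 1)⁻¹ * b) * y) * ENNReal.ofReal (y ^ N) *
          ‖f x - Sproj χ N f x‖ₑ ^ 2 :=
        lintegral_mono fun x => enorm_cube_le_tsum hy (by positivity) (f x) (fun N => Sproj χ N f x)
          fun N => norm_Sproj_le hχ hy hb f hf N x
    _ = ∑' N : ℤ, ENNReal.ofReal (8 * ((y - 1)⁻¹ * b) * y) * ENNReal.ofReal (y ^ N) *
          ∫⁻ x, ‖f x - Sproj χ N f x‖ₑ ^ 2 := by
        have hm : ∀ N : ℤ, Measurable fun x => ‖f x - Sproj χ N f x‖ₑ ^ 2 := fun N => by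
          have : Continuous (Sproj χ N f) := by
            rw [Sproj_eq_fourierInv hχ]
            exact SchwartzMap.continuous _
          have h2 : Continuous fun x => ‖f x - Sproj χ N f x‖ₑ ^ 2 := by fun_prop
          exact h2.measurable
        rw [lintegral_tsum fun N => ((hm N).const_mul _).aemeasurable]
        exact tsum_congr fun N => lintegral_const_mul _ (hm N)
    _ ≤ ∑' N : ℤ, ENNReal.ofReal (8 * ((y - 1)⁻¹ * b) * y) * ENNReal.ofReal (y ^ N) *
          ∫⁻ ξ, (if (2 : ℝ) ^ N ≤ 4 / 3 * ‖ξ‖ then 1 else 0) * ‖𝓕 f ξ‖ₑ ^ 2 :=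
        ENNReal.tsum_le_tsum fun N => mul_le_mul_right (lintegral_enorm_sub_Sproj_sq_le hχ N f) _
    _ = ENNReal.ofReal (8 * ((y - 1)⁻¹ * b) * y) * ∫⁻ ξ, (∑' N : ℤ, ENNReal.ofReal (y ^ N) *
          (if (2 : ℝ) ^ N ≤ 4 / 3 * ‖ξ‖ then 1 else 0)) * ‖𝓕 f ξ‖ₑ ^ 2 := by
        have hm : ∀ N : ℤ, Measurable fun ξ : E3 =>
            (if (2 : ℝ) ^ N ≤ 4 / 3 * ‖ξ‖ then (1 : ℝ≥0∞) else 0) * ‖𝓕 f ξ‖ₑ ^ 2 := fun N => by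
          refine Measurable.mul (Measurable.ite ?_ measurable_const measurable_const) ?_
          · exact measurableSet_le measurable_const (by fun_prop)
          · exact (by fun_prop : Continuous fun ξ => ‖𝓕 f ξ‖ₑ ^ 2).measurable
        simp_rw [mul_assoc, ENNReal.tsum_mul_left, ← ENNReal.tsum_mul_right]
        rw [lintegral_tsum fun N => by
          simp_rw [mul_assoc]; exact ((hm N).const_mul _).aemeasurable]
        congr 1
        refine tsum_congr fun N => ?_
        simp_rw [mul_assoc]
        rw [lintegral_const_mul _ (hm N)]
    _ ≤ ENNReal.ofReal (8 * ((y - 1)⁻¹ * b) * y) * ∫⁻ ξ,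
          (G * ENNReal.ofReal ((4 / 3) ^ α)) * (ENNReal.ofReal (‖ξ‖ ^ α) * ‖𝓕 f ξ‖ₑ ^ 2) := by
        refine mul_le_mul_right (lintegral_mono fun ξ => ?_) _
        refine (mul_le_mul_left (tsum_zpow_indicator_le hα (r := 4 / 3 * ‖ξ‖) (by positivity)) _).trans_eq ?_
        rw [Real.mul_rpow (by norm_num) (norm_nonneg _), ENNReal.ofReal_mul (by positivity)]
        ring
    _ = _ := by
        rw [lintegral_const_mul' _ _ (by finiteness)]
        have : 8 * ((y - 1)⁻¹ * b) * y = 8 * (y - 1)⁻¹ * y * b := by ring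
        rw [this, ENNReal.ofReal_mul (by positivity)]
        ring

/-- The squared homogeneous Sobolev norm `‖f‖_{Ḣ^{α/2}}²`. -/
def sobolevEnergy (α : ℝ) (f : 𝓢(E3, ℂ)) : ℝ≥0∞ :=
  ∫⁻ ξ, ENNReal.ofReal (‖ξ‖ ^ α) * ‖𝓕 f ξ‖ₑ ^ 2

theorem ae_ne_zero_E3 : ∀ᵐ ξ : E3, ξ ≠ 0 := by simp [ae_iff]

theorem lintegral_cube_eq_zero_of_sobolevEnergy_eq_zero {α : ℝ} {f : 𝓢(E3, ℂ)}
    (h : sobolevEnergy α f = 0) : ∫⁻ x, ‖f x‖ₑ ^ 3 = 0 := by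
  have hFc : Continuous (𝓕 f : 𝓢(E3, ℂ)) := (𝓕 f).continuous
  have hm2 : ∀ g : 𝓢(E3, ℂ), Measurable fun ξ => ‖g ξ‖ₑ ^ 2 := fun g =>
    (by have := g.continuous; fun_prop : Continuous fun ξ => ‖g ξ‖ₑ ^ 2).measurable
  have hm : Measurable fun ξ : E3 => ENNReal.ofReal (‖ξ‖ ^ α) * ‖𝓕 f ξ‖ₑ ^ 2 :=
    Measurable.mul (by fun_prop) (hm2 _)
  rw [sobolevEnergy, lintegral_eq_zero_iff hm] at h
  have h1 : ∫⁻ ξ, ‖𝓕 f ξ‖ₑ ^ 2 = 0 := by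
    rw [lintegral_eq_zero_iff (hm2 _)]
    filter_upwards [h, ae_ne_zero_E3] with ξ h0 hξ
    refine (mul_eq_zero.1 h0).resolve_left ?_
    have : 0 < ‖ξ‖ := norm_pos_iff.2 hξ
    rw [ENNReal.ofReal_eq_zero, not_le]
    positivity
  rw [lintegral_enorm_fourier_sq, lintegral_eq_zero_iff (hm2 _)] at h1
  refine lintegral_eq_zero_of_ae_eq_zero ?_
  filter_upwards [h1] with x hx
  have : ‖f x‖ₑ = 0 := by simpa using hx
  simp [this]

/-- The refined Sobolev inequality `‖f‖_{L³}³ ≤ C ‖f‖_{Ḃ^{-α}_{∞,∞}} ‖f‖_{Ḣ^{α/2}}²`. -/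
theorem exists_lintegral_cube_le {χ : E3 → ℝ} (hχ : IsLPCutoff χ) {α : ℝ} (hα : 0 < α) :
    ∃ C : ℝ≥0∞, C ≠ ∞ ∧ ∀ (f : 𝓢(E3, ℂ)) (B : ℝ≥0∞), sobolevEnergy α f ≠ ∞ →
      (∀ (j : ℤ) (x : E3), ‖Dproj χ j f x‖ₑ ≤ ENNReal.ofReal (((2 : ℝ) ^ α) ^ j) * B) →
      ∫⁻ x, ‖f x‖ₑ ^ 3 ≤ C * (B * sobolevEnergy α f) := by
  obtain ⟨C, hC, h⟩ := exists_lintegral_cube_le_of_pos hχ hα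
  refine ⟨C + 1, by finiteness, fun f B hE hf => ?_⟩
  rcases eq_or_ne (sobolevEnergy α f) 0 with h0 | h0
  · rw [lintegral_cube_eq_zero_of_sobolevEnergy_eq_zero h0]
    exact zero_le
  rcases eq_or_ne B ∞ with rfl | hB
  · rw [ENNReal.top_mul h0, ENNReal.mul_top (by simp)]
    exact le_top
  have hlim : Tendsto (fun n : ℕ => C * (ENNReal.ofReal (B.toReal + 1 / ((n : ℝ) + 1)) *
      sobolevEnergy α f)) atTop (nhds (C * (B * sobolevEnergy α f))) := by
    refine ENNReal.Tendsto.const_mul (ENNReal.Tendsto.mul_const ?_ (Or.inr hE)) (Or.inr hC)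
    have : Tendsto (fun n : ℕ => B.toReal + 1 / ((n : ℝ) + 1)) atTop (nhds B.toReal) := by
      simpa using (tendsto_one_div_add_atTop_nhds_zero_nat (𝕜 := ℝ)).const_add B.toReal
    simpa [ENNReal.ofReal_toReal hB] using ENNReal.tendsto_ofReal this
  have hle : ∫⁻ x, ‖f x‖ₑ ^ 3 ≤ C * (B * sobolevEnergy α f) := by
    refine ge_of_tendsto' hlim fun n => ?_
    have hn : 0 < 1 / ((n : ℝ) + 1) := by positivity
    have hBn : 0 ≤ B.toReal := ENNReal.toReal_nonneg
    refine h f _ (by positivity) fun j x => ?_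
    have hj : 0 < ((2 : ℝ) ^ α) ^ j := by positivity
    have h1 := hf j x
    rw [← ofReal_norm, ← ENNReal.ofReal_toReal hB, ← ENNReal.ofReal_mul hj.le,
      ENNReal.ofReal_le_ofReal_iff (by positivity)] at h1
    refine h1.trans ?_
    gcongr
    linarith
  exact hle.trans (mul_le_mul_left le_self_add _)

/-- The symbol `ξ_a ξ_b / |ξ|²` of a double Riesz transform, cut off to an annulus on which the
Littlewood–Paley symbol `φ̂` is supported. -/
def rieszSymbol (χ : E3 → ℝ) (a b : Fin 3) (ξ : E3) : ℂ :=
  (((χ ((1 / 4 : ℝ) • ξ) - χ ((2 : ℝ) • ξ)) * (ξ a * ξ b) / ‖ξ‖ ^ 2 : ℝ) : ℂ)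

theorem hasCompactSupport_rieszSymbol {χ : E3 → ℝ} (hχ : IsLPCutoff χ) (a b : Fin 3) :
    HasCompactSupport (rieszSymbol χ a b) := by
  refine HasCompactSupport.intro (isCompact_closedBall 0 (16 / 3)) fun ξ hξ => ?_
  rw [mem_closedBall_zero_iff, not_le] at hξ
  rw [rieszSymbol, hχ.2.2.2.2.2.2, hχ.2.2.2.2.2.2]
  · simp
  · rw [norm_smul, Real.norm_two]; linarith
  · rw [norm_smul]; norm_num; linarith

theorem contDiff_rieszSymbol {χ : E3 → ℝ} (hχ : IsLPCutoff χ) (a b : Fin 3) :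
    ContDiff ℝ ((⊤ : ℕ∞) : WithTop ℕ∞) (rieszSymbol χ a b) := by
  refine Complex.ofRealCLM.contDiff.comp (contDiff_iff_contDiffAt.2 fun ξ => ?_)
  have hc := hχ.1
  rcases eq_or_ne ξ 0 with rfl | hξ
  · refine (contDiffAt_const (c := (0 : ℝ))).congr_of_eventuallyEq ?_
    filter_upwards [Metric.ball_mem_nhds (0 : E3) (by norm_num : (0 : ℝ) < 3 / 8)] with ξ hξ
    rw [mem_ball_zero_iff] at hξ
    rw [hχ.2.2.2.2.2.1, hχ.2.2.2.2.2.1]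
    · simp only [sub_self, zero_mul]
      exact zero_div _
    · rw [norm_smul, Real.norm_two]; linarith
    · rw [norm_smul]; norm_num; linarith [norm_nonneg ξ]
  · have h1 : ContDiff ℝ ((⊤ : ℕ∞) : WithTop ℕ∞) fun ξ : E3 =>
        (χ ((1 / 4 : ℝ) • ξ) - χ ((2 : ℝ) • ξ)) * (ξ a * ξ b) := by
      have h2 : ∀ i, ContDiff ℝ ((⊤ : ℕ∞) : WithTop ℕ∞) fun ξ : E3 => ξ i := fun i =>
        (EuclideanSpace.proj (𝕜 := ℝ) i).contDiff
      have h3 := h2 a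
      have h4 := h2 b
      fun_prop
    exact h1.contDiffAt.div (contDiff_norm_sq ℝ).contDiffAt (by simpa using hξ)

/-- The cut-off double Riesz transforms are bounded on `L^∞` uniformly in the scale. -/
theorem exists_norm_fourierInv_rieszSymbol_mul_le {χ : E3 → ℝ} (hχ : IsLPCutoff χ) :
    ∃ A : ℝ, 0 ≤ A ∧ ∀ (a b : Fin 3) (t : ℝ) (G : 𝓢(E3, ℂ)) (m : ℝ),
      (∀ x, ‖𝓕⁻ (G : E3 → ℂ) x‖ ≤ m) →
      ∀ x, ‖𝓕⁻ (fun ξ => rieszSymbol χ a b (t • ξ) * G ξ) x‖ ≤ A * m := by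
  let M : Fin 3 → Fin 3 → 𝓢(E3, ℂ) := fun a b =>
    (hasCompactSupport_rieszSymbol hχ a b).toSchwartzMap (contDiff_rieszSymbol hχ a b)
  have hM : ∀ a b, 𝓕 (⇑(𝓕⁻ (M a b) : 𝓢(E3, ℂ))) = rieszSymbol χ a b := fun a b => by
    rw [← SchwartzMap.fourier_coe, FourierTransform.fourier_fourierInv_eq]
    rfl
  refine ⟨∑ a, ∑ b, ∫ y, ‖(𝓕⁻ (M a b) : 𝓢(E3, ℂ)) y‖, by positivity, fun a b t G m hm x => ?_⟩
  rw [← hM]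
  refine (norm_fourierInv_dilated_fourier_mul_le (SchwartzMap.integrable _) G.integrable t hm
    x).trans ?_
  have hm0 : 0 ≤ m := (norm_nonneg _).trans (hm 0)
  gcongr
  have h0 : ∀ a b, 0 ≤ ∫ y, ‖(𝓕⁻ (M a b) : 𝓢(E3, ℂ)) y‖ := fun a b =>
    integral_nonneg fun y => norm_nonneg _
  exact (Finset.single_le_sum (fun b _ => h0 a b) (Finset.mem_univ b)).trans
    (Finset.single_le_sum (f := fun a => ∑ b, ∫ y, ‖(𝓕⁻ (M a b) : 𝓢(E3, ℂ)) y‖)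
      (fun a _ => Finset.sum_nonneg fun b _ => h0 a b) (Finset.mem_univ a))

/-- On the support of the Littlewood–Paley symbol, the cut-off Riesz symbol is the Riesz symbol. -/
theorem rieszSymbol_mul_annulus {χ : E3 → ℝ} (hχ : IsLPCutoff χ) (a b : Fin 3) (j : ℤ) (ξ : E3) :
    rieszSymbol χ a b ((2 : ℝ) ^ (-j) • ξ) *
        ((χ ((2 : ℝ) ^ (-(j + 1)) • ξ) - χ ((2 : ℝ) ^ (-j) • ξ) : ℝ) : ℂ) =
      ((ξ a * ξ b / ‖ξ‖ ^ 2 : ℝ) : ℂ) *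
        ((χ ((2 : ℝ) ^ (-(j + 1)) • ξ) - χ ((2 : ℝ) ^ (-j) • ξ) : ℝ) : ℂ) := by
  have hsplit : (2 : ℝ) ^ (-(j + 1)) • ξ = (1 / 2 : ℝ) • ((2 : ℝ) ^ (-j) • ξ) := by
    rw [smul_smul, neg_add, zpow_add₀ two_ne_zero, mul_comm]
    norm_num
  have hquot : ((2 : ℝ) ^ (-j) • ξ) a * ((2 : ℝ) ^ (-j) • ξ) b / ‖(2 : ℝ) ^ (-j) • ξ‖ ^ 2 =
      ξ a * ξ b / ‖ξ‖ ^ 2 := by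
    have : (2 : ℝ) ^ (-j) ≠ 0 := by positivity
    rw [norm_smul, Real.norm_of_nonneg (by positivity : (0 : ℝ) ≤ (2 : ℝ) ^ (-j)), mul_pow,
      PiLp.smul_apply, PiLp.smul_apply, smul_eq_mul, smul_eq_mul, mul_mul_mul_comm, ← pow_two,
      mul_div_mul_left _ _ (by positivity)]
  rw [hsplit, ← hquot]
  set η := (2 : ℝ) ^ (-j) • ξ
  rcases le_or_gt ‖η‖ (3 / 4) with h1 | h1
  · rw [hχ.2.2.2.2.2.1 η h1, hχ.2.2.2.2.2.1 ((1 / 2 : ℝ) • η)]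
    · simp
    · rw [norm_smul]; norm_num; linarith [norm_nonneg η]
  rcases le_or_gt ‖η‖ (8 / 3) with h2 | h2
  · rw [rieszSymbol, hχ.2.2.2.2.2.1 ((1 / 4 : ℝ) • η), hχ.2.2.2.2.2.2 ((2 : ℝ) • η)]
    · simp
    · rw [norm_smul, Real.norm_two]; linarith
    · rw [norm_smul]; norm_num; linarith
  · rw [hχ.2.2.2.2.2.2 η (by linarith), hχ.2.2.2.2.2.2 ((1 / 2 : ℝ) • η)]
    · simp
    · rw [norm_smul]; norm_num; linarith

/-- The `i`-th partial derivative of a real Schwartz function. -/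
def schwartzPd (i : Fin 3) (f : 𝓢(E3, ℝ)) : 𝓢(E3, ℝ) :=
  LineDeriv.lineDerivOp (EuclideanSpace.single i (1 : ℝ) : E3) f

theorem coe_schwartzPd (i : Fin 3) (f : 𝓢(E3, ℝ)) : ⇑(schwartzPd i f) = pd i f :=
  funext fun x => SchwartzMap.lineDerivOp_apply_eq_fderiv _ f x

/-- The vorticity of a Schwartz vector field, with Schwartz components. -/
def vorticity (u : Fin 3 → 𝓢(E3, ℝ)) (k : Fin 3) : 𝓢(E3, ℝ) :=
  schwartzPd (k + 1) (u (k + 2)) - schwartzPd (k + 2) (u (k + 1))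

theorem coe_vorticity (u : Fin 3 → 𝓢(E3, ℝ)) (k : Fin 3) : ⇑(vorticity u k) = curlS u k := by
  ext x
  rw [vorticity, sub_apply, coe_schwartzPd, coe_schwartzPd]
  fin_cases k <;> rfl

theorem complexify_sub (f g : 𝓢(E3, ℝ)) : complexify (f - g) = complexify f - complexify g := by
  ext x
  simp [complexify_apply, sub_apply]

theorem fourier_complexify_schwartzPd (i : Fin 3) (f : 𝓢(E3, ℝ)) (ξ : E3) :
    𝓕 (complexify (schwartzPd i f)) ξ = 2 * π * Complex.I * (ξ i : ℂ) * 𝓕 (complexify f) ξ := by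
  rw [schwartzPd, ← lineDerivOp_complexify, fourier_lineDerivOp_apply,
    EuclideanSpace.inner_single_right]
  simp

theorem lintegral_enorm_fourier_complexify_sq (f : 𝓢(E3, ℝ)) :
    ∫⁻ ξ, ‖𝓕 (complexify f) ξ‖ₑ ^ 2 = eLpNorm f 2 volume ^ (2 : ℝ) := by
  have h := eLpNorm_nnreal_pow_eq_lintegral (μ := volume) (f := f) (two_ne_zero (α := NNReal))
  rw [lintegral_enorm_fourier_sq]
  simp only [NNReal.coe_ofNat, ENNReal.coe_ofNat] at h
  rw [h]
  refine lintegral_congr fun x => ?_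
  rw [complexify_apply, ENNReal.rpow_ofNat, ← ofReal_norm, Complex.norm_real, ofReal_norm]

theorem measurable_enorm_fourier_sq (f : 𝓢(E3, ℂ)) : Measurable fun ξ => ‖𝓕 f ξ‖ₑ ^ 2 :=
  (by have := (𝓕 f).continuous; fun_prop : Continuous fun ξ => ‖𝓕 f ξ‖ₑ ^ 2).measurable

/-- Interpolation of `Ḣ^{α/2}` between `L²` and `Ḣ¹`. -/
theorem sobolevEnergy_le_rpow_mul_rpow {α : ℝ} (hα : 0 < α) (hα1 : α < 1) (f : 𝓢(E3, ℂ)) :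
    sobolevEnergy α f ≤ (∫⁻ ξ, ‖𝓕 f ξ‖ₑ ^ 2) ^ (1 - α / 2) *
      (∫⁻ ξ, ENNReal.ofReal (‖ξ‖ ^ 2) * ‖𝓕 f ξ‖ₑ ^ 2) ^ (α / 2) := by
  have hm := measurable_enorm_fourier_sq f
  have hm1 : Measurable fun ξ : E3 => ENNReal.ofReal (‖ξ‖ ^ 2) * ‖𝓕 f ξ‖ₑ ^ 2 :=
    Measurable.mul (by fun_prop) hm
  refine le_trans (le_of_eq ?_) (ENNReal.lintegral_mul_norm_pow_le (p := 1 - α / 2) (q := α / 2)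
    hm.aemeasurable hm1.aemeasurable (by linarith) (by linarith) (by ring))
  refine lintegral_congr fun ξ => ?_
  rw [ENNReal.mul_rpow_of_nonneg _ _ (by linarith), mul_left_comm,
    ← ENNReal.rpow_add_of_nonneg _ _ (by linarith) (by linarith), sub_add_cancel, ENNReal.rpow_one,
    ENNReal.ofReal_rpow_of_nonneg (by positivity) (by linarith), ← Real.rpow_natCast,
    ← Real.rpow_mul (norm_nonneg _)]
  congr 4
  push_cast
  ring

theorem lintegral_norm_sq_mul_enorm_fourier_sq_le (f : 𝓢(E3, ℝ)) :
    ∫⁻ ξ, ENNReal.ofReal (‖ξ‖ ^ 2) * ‖𝓕 (complexify f) ξ‖ₑ ^ 2 ≤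
      ∑ i : Fin 3, eLpNorm (pd i f) 2 volume ^ (2 : ℝ) := by
  simp_rw [← coe_schwartzPd, ← lintegral_enorm_fourier_complexify_sq]
  rw [← lintegral_finsetSum _ fun i _ => measurable_enorm_fourier_sq _]
  refine lintegral_mono fun ξ => ?_
  simp only
  rw [EuclideanSpace.norm_sq_eq, ENNReal.ofReal_sum_of_nonneg (fun i _ => by positivity),
    Finset.sum_mul]
  refine Finset.sum_le_sum fun i _ => ?_
  rw [fourier_complexify_schwartzPd, enorm_mul, mul_pow]
  gcongr
  rw [ENNReal.ofReal_pow (norm_nonneg _)]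
  gcongr
  rw [← ofReal_norm]
  refine ENNReal.ofReal_le_ofReal ?_
  rw [norm_mul, Complex.norm_real]
  refine le_mul_of_one_le_left (norm_nonneg _) ?_
  simp only [norm_mul, Complex.norm_ofNat, Complex.norm_real, Complex.norm_I, Real.norm_eq_abs,
    abs_of_pos Real.pi_pos]
  linarith [Real.pi_gt_three]

theorem sobolevEnergy_vorticity_le {α : ℝ} (hα : 0 < α) (hα1 : α < 1) (u : Fin 3 → 𝓢(E3, ℝ))
    (k : Fin 3) :
    sobolevEnergy α (complexify (vorticity u k)) ≤
      gradL2 (curlS u) ^ α * vecL2 (curlS u) ^ (2 - α) := by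
  refine (sobolevEnergy_le_rpow_mul_rpow hα hα1 _).trans ?_
  rw [lintegral_enorm_fourier_complexify_sq, mul_comm, gradL2, vecL2, ← ENNReal.rpow_mul _ (1 / 2),
    ← ENNReal.rpow_mul _ (1 / 2), show (1 / 2 * α : ℝ) = α / 2 by ring,
    show (1 / 2 * (2 - α) : ℝ) = 1 - α / 2 by ring]
  have h1 : 0 ≤ 1 - α / 2 := by linarith
  gcongr ?_ ^ (α / 2) * ?_ ^ (1 - α / 2)
  · refine (lintegral_norm_sq_mul_enorm_fourier_sq_le _).trans ?_
    rw [coe_vorticity]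
    refine Finset.sum_le_sum fun i _ => ?_
    exact Finset.single_le_sum (f := fun j => eLpNorm (pd i (curlS u j)) 2 volume ^ (2 : ℝ))
      (fun _ _ => zero_le) (Finset.mem_univ k)
  · rw [coe_vorticity]
    exact Finset.single_le_sum (f := fun j => eLpNorm (curlS u j) 2 volume ^ (2 : ℝ))
      (fun _ _ => zero_le) (Finset.mem_univ k)

theorem gradL2_rpow_mul_vecL2_rpow_ne_top {α : ℝ} (hα : 0 < α) (hα1 : α < 1)
    (u : Fin 3 → 𝓢(E3, ℝ)) : gradL2 (curlS u) ^ α * vecL2 (curlS u) ^ (2 - α) ≠ ∞ := by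
  have h : ∀ f : 𝓢(E3, ℝ), eLpNorm f 2 volume ≠ ∞ := fun f =>
    (SchwartzMap.memLp f 2 volume).eLpNorm_ne_top
  have h1 : gradL2 (curlS u) ≠ ∞ := by
    refine ENNReal.rpow_ne_top_of_nonneg (by norm_num) ?_
    refine ENNReal.sum_ne_top.2 fun i _ => ENNReal.sum_ne_top.2 fun j _ => ?_
    rw [← coe_vorticity, ← coe_schwartzPd]
    exact ENNReal.rpow_ne_top_of_nonneg (by norm_num) (h _)
  have h2 : vecL2 (curlS u) ≠ ∞ := by
    refine ENNReal.rpow_ne_top_of_nonneg (by norm_num) ?_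
    refine ENNReal.sum_ne_top.2 fun i _ => ?_
    rw [← coe_vorticity]
    exact ENNReal.rpow_ne_top_of_nonneg (by norm_num) (h _)
  exact ENNReal.mul_ne_top (ENNReal.rpow_ne_top_of_nonneg hα.le h1)
    (ENNReal.rpow_ne_top_of_nonneg (by linarith) h2)

/-- The Besov norm controls each Littlewood–Paley block pointwise. -/
theorem enorm_Dproj_vorticity_le {χ : E3 → ℝ} (hχ : IsLPCutoff χ) (α : ℝ)
    (u : Fin 3 → 𝓢(E3, ℝ)) (k : Fin 3) (j : ℤ) (x : E3) :
    ‖Dproj χ j (complexify (vorticity u k)) x‖ₑ ≤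
      ENNReal.ofReal (((2 : ℝ) ^ α) ^ j) * vecBesovInf χ (-α) (curlS u) := by
  set B := vecBesovInf χ (-α) (curlS u) with hB
  have hcoe : ⇑(complexify (vorticity u k)) = fun x => ((curlS u k x : ℝ) : ℂ) := by
    ext x
    rw [complexify_apply, coe_vorticity]
  have h1 : (2 : ℝ≥0∞) ^ ((j : ℝ) * -α) *
      eLpNorm (Dproj χ j (complexify (vorticity u k))) ⊤ volume ≤ B := by
    rw [hcoe, hB, vecBesovInf]
    exact le_iSup_of_le k (le_iSup (fun j : ℤ => (2 : ℝ≥0∞) ^ ((j : ℝ) * -α) *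
      eLpNorm (Dproj χ j fun x => ((curlS u k x : ℝ) : ℂ)) ⊤ volume) j)
  have hpow : ENNReal.ofReal (((2 : ℝ) ^ α) ^ j) = (2 : ℝ≥0∞) ^ ((j : ℝ) * α) := by
    rw [← Real.rpow_intCast, ← Real.rpow_mul (by norm_num), mul_comm α,
      ← ENNReal.ofReal_rpow_of_pos (by norm_num)]
    simp
  have h2 : eLpNorm (Dproj χ j (complexify (vorticity u k))) ⊤ volume ≤
      ENNReal.ofReal (((2 : ℝ) ^ α) ^ j) * B := by
    refine le_trans (le_of_eq ?_) (mul_le_mul_right h1 _)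
    rw [hpow, ← mul_assoc, ← ENNReal.rpow_add _ _ (by norm_num) (by norm_num)]
    simp
  have hcont : Continuous (Dproj χ j (complexify (vorticity u k))) := by
    rw [Dproj_eq_fourierInv hχ]
    exact SchwartzMap.continuous _
  have hcl : IsClosed {x | ‖Dproj χ j (complexify (vorticity u k)) x‖ₑ ≤
      ENNReal.ofReal (((2 : ℝ) ^ α) ^ j) * B} := isClosed_le hcont.enorm continuous_const
  have hae : ∀ᵐ x : E3, ‖Dproj χ j (complexify (vorticity u k)) x‖ₑ ≤
      ENNReal.ofReal (((2 : ℝ) ^ α) ^ j) * B := by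
    rw [eLpNorm_exponent_top] at h2
    filter_upwards [ae_le_eLpNormEssSup (μ := volume)
      (f := Dproj χ j (complexify (vorticity u k)))] with x hx using hx.trans h2
  exact hcl.closure_subset (Measure.dense_of_ae hae x)

theorem fourier_complexify_vorticity (u : Fin 3 → 𝓢(E3, ℝ)) (k : Fin 3) (ξ : E3) :
    𝓕 (complexify (vorticity u k)) ξ =
      2 * π * Complex.I * (ξ (k + 1) * 𝓕 (complexify (u (k + 2))) ξ -
        ξ (k + 2) * 𝓕 (complexify (u (k + 1))) ξ) := by
  rw [vorticity, complexify_sub, schwartz_fourier_sub, sub_apply, fourier_complexify_schwartzPd,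
    fourier_complexify_schwartzPd]
  ring

theorem sum_mul_fourier_complexify_eq_zero {u : Fin 3 → 𝓢(E3, ℝ)}
    (hu : ∀ x, ∑ i : Fin 3, pd i (⇑(u i)) x = 0) (ξ : E3) :
    ∑ i : Fin 3, 2 * π * Complex.I * (ξ i : ℂ) * 𝓕 (complexify (u i)) ξ = 0 := by
  have h1 : complexify (schwartzPd 0 (u 0)) = (0 - complexify (schwartzPd 1 (u 1))) -
      complexify (schwartzPd 2 (u 2)) := by
    ext x
    have h := hu x
    rw [Fin.sum_univ_three] at h
    simp only [sub_apply, complexify_apply, coe_schwartzPd, zero_apply]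
    have h2 : pd 0 (u 0) x = 0 - pd 1 (u 1) x - pd 2 (u 2) x := by linarith
    rw [h2]
    push_cast
    ring
  have h2 := congrArg (fun f : 𝓢(E3, ℂ) => 𝓕 f ξ) h1
  have h0 : 𝓕 (0 : 𝓢(E3, ℂ)) = 0 := map_zero (FourierTransform.fourierCLM ℂ 𝓢(E3, ℂ))
  simp only [schwartz_fourier_sub, sub_apply, fourier_complexify_schwartzPd, h0, zero_apply] at h2
  rw [Fin.sum_univ_three, h2]
  ring

/-- The Biot–Savart law in Fourier variables: the velocity gradient is a combination of double
Riesz transforms of the vorticity. -/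
theorem fourier_complexify_schwartzPd_eq_vorticity {u : Fin 3 → 𝓢(E3, ℝ)}
    (hu : ∀ x, ∑ i : Fin 3, pd i (⇑(u i)) x = 0) (i k : Fin 3) (ξ : E3) :
    𝓕 (complexify (schwartzPd i (u k))) ξ =
      ((ξ i * ξ (k + 2) / ‖ξ‖ ^ 2 : ℝ) : ℂ) * 𝓕 (complexify (vorticity u (k + 1))) ξ -
        ((ξ i * ξ (k + 1) / ‖ξ‖ ^ 2 : ℝ) : ℂ) * 𝓕 (complexify (vorticity u (k + 2))) ξ := by
  rcases eq_or_ne ξ 0 with rfl | hξ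
  · rw [fourier_complexify_schwartzPd]
    simp
  have hn : ((‖ξ‖ : ℂ)) ^ 2 ≠ 0 := by simpa using hξ
  have hns : ((‖ξ‖ : ℂ)) ^ 2 = (ξ 0 : ℂ) ^ 2 + (ξ 1 : ℂ) ^ 2 + (ξ 2 : ℂ) ^ 2 := by
    have h := EuclideanSpace.norm_sq_eq ξ
    simp only [Fin.sum_univ_three, Real.norm_eq_abs, sq_abs] at h
    exact_mod_cast h
  have hdiv := sum_mul_fourier_complexify_eq_zero hu ξ
  rw [Fin.sum_univ_three] at hdiv
  rw [fourier_complexify_schwartzPd, fourier_complexify_vorticity, fourier_complexify_vorticity]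
  push_cast
  rw [div_mul_eq_mul_div, div_mul_eq_mul_div, ← sub_div, eq_div_iff hn, hns]
  fin_cases k
  · simp only [Fin.zero_eta, Fin.isValue, Fin.reduceAdd, zero_add]
    linear_combination (ξ i : ℂ) * (ξ 0 : ℂ) * hdiv
  · simp only [Fin.mk_one, Fin.isValue, Fin.reduceAdd]
    linear_combination (ξ i : ℂ) * (ξ 1 : ℂ) * hdiv
  · simp only [Fin.reduceFinMk, Fin.isValue, Fin.reduceAdd]
    linear_combination (ξ i : ℂ) * (ξ 2 : ℂ) * hdiv

theorem norm_rieszMultiplier_le_one (a b : Fin 3) (ξ : E3) :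
    ‖((ξ a * ξ b / ‖ξ‖ ^ 2 : ℝ) : ℂ)‖ ≤ 1 := by
  rw [Complex.norm_real, norm_div, norm_mul, norm_pow, norm_norm]
  refine div_le_one_of_le₀ ?_ (by positivity)
  rw [pow_two]
  exact mul_le_mul (PiLp.norm_apply_le ξ a) (PiLp.norm_apply_le ξ b) (norm_nonneg _) (norm_nonneg _)

theorem ENNReal.add_sq_le_four_mul (a b : ℝ≥0∞) : (a + b) ^ 2 ≤ 4 * (a ^ 2 + b ^ 2) := by
  rcases le_total a b with h | h
  · calc (a + b) ^ 2 ≤ (b + b) ^ 2 := by gcongr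
      _ = 4 * b ^ 2 := by ring
      _ ≤ _ := by gcongr; exact le_add_self
  · calc (a + b) ^ 2 ≤ (a + a) ^ 2 := by gcongr
      _ = 4 * a ^ 2 := by ring
      _ ≤ _ := by gcongr; exact le_self_add

theorem sobolevEnergy_velocityGradient_le (α : ℝ) {u : Fin 3 → 𝓢(E3, ℝ)}
    (hu : ∀ x, ∑ i : Fin 3, pd i (⇑(u i)) x = 0) (i k : Fin 3) :
    sobolevEnergy α (complexify (schwartzPd i (u k))) ≤
      4 * (sobolevEnergy α (complexify (vorticity u (k + 1))) +
        sobolevEnergy α (complexify (vorticity u (k + 2)))) := by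
  have hm : ∀ f : 𝓢(E3, ℂ), Measurable fun ξ : E3 => ENNReal.ofReal (‖ξ‖ ^ α) * ‖𝓕 f ξ‖ₑ ^ 2 :=
    fun f => Measurable.mul (by fun_prop) (measurable_enorm_fourier_sq f)
  rw [sobolevEnergy, sobolevEnergy, sobolevEnergy, ← lintegral_add_left (hm _),
    ← lintegral_const_mul' _ _ (by norm_num)]
  refine lintegral_mono fun ξ => ?_
  simp only
  have h1 : ∀ (a b : Fin 3) (z : ℂ), ‖((ξ a * ξ b / ‖ξ‖ ^ 2 : ℝ) : ℂ) * z‖ₑ ≤ ‖z‖ₑ :=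
    fun a b z => by
      rw [enorm_mul]
      refine mul_le_of_le_one_left zero_le ?_
      rw [← ofReal_norm, ENNReal.ofReal_le_one]
      exact norm_rieszMultiplier_le_one a b ξ
  rw [fourier_complexify_schwartzPd_eq_vorticity hu, ← mul_add, mul_left_comm]
  gcongr
  refine le_trans ?_ (ENNReal.add_sq_le_four_mul _ _)
  gcongr
  exact enorm_sub_le.trans (add_le_add (h1 _ _ _) (h1 _ _ _))

/-- The blocks of the velocity gradient are bounded by those of the vorticity. -/
theorem exists_norm_Dproj_velocityGradient_le {χ : E3 → ℝ} (hχ : IsLPCutoff χ) :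
    ∃ A : ℝ, 0 ≤ A ∧ ∀ u : Fin 3 → 𝓢(E3, ℝ), (∀ x, ∑ i : Fin 3, pd i (⇑(u i)) x = 0) →
      ∀ (j : ℤ) (m : ℝ), (∀ k x, ‖Dproj χ j (complexify (vorticity u k)) x‖ ≤ m) →
      ∀ i k x, ‖Dproj χ j (complexify (schwartzPd i (u k))) x‖ ≤ A * m := by
  obtain ⟨A, hA, h⟩ := exists_norm_fourierInv_rieszSymbol_mul_le hχ
  refine ⟨2 * A, by positivity, fun u hu j m hm i k x => ?_⟩
  let G : Fin 3 → 𝓢(E3, ℂ) := fun k =>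
    lowFreq χ (j + 1) (complexify (vorticity u k)) - lowFreq χ j (complexify (vorticity u k))
  have hG : ∀ k ξ, G k ξ =
      ((χ ((2 : ℝ) ^ (-(j + 1)) • ξ) - χ ((2 : ℝ) ^ (-j) • ξ) : ℝ) : ℂ) *
        𝓕 (complexify (vorticity u k)) ξ := fun k ξ => by
    simp only [G, sub_apply, lowFreq_apply hχ]
    push_cast
    ring
  have hGm : ∀ k x, ‖𝓕⁻ (G k : E3 → ℂ) x‖ ≤ m := fun k x => by
    rw [← SchwartzMap.fourierInv_coe, ← Dproj_eq_fourierInv hχ]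
    exact hm k x
  have htemp : ∀ a b, (fun ξ : E3 => rieszSymbol χ a b ((2 : ℝ) ^ (-j) • ξ)).HasTemperateGrowth :=
    fun a b => ((hasCompactSupport_rieszSymbol hχ a b).hasTemperateGrowth
      (contDiff_rieszSymbol hχ a b)).comp
        (((2 : ℝ) ^ (-j)) • ContinuousLinearMap.id ℝ E3).hasTemperateGrowth
  let K : Fin 3 → Fin 3 → Fin 3 → 𝓢(E3, ℂ) := fun a b k =>
    SchwartzMap.smulLeftCLM ℂ (fun ξ : E3 => rieszSymbol χ a b ((2 : ℝ) ^ (-j) • ξ)) (G k)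
  have hK : ∀ a b k ξ, K a b k ξ = rieszSymbol χ a b ((2 : ℝ) ^ (-j) • ξ) * G k ξ :=
    fun a b k ξ => by
      simp only [K]
      rw [SchwartzMap.smulLeftCLM_apply_apply (htemp a b), smul_eq_mul]
  have hKm : ∀ a b k x, ‖(𝓕⁻ (K a b k) : 𝓢(E3, ℂ)) x‖ ≤ A * m := fun a b k x => by
    rw [SchwartzMap.fourierInv_coe, funext (hK a b k)]
    exact h a b _ (G k) m (hGm k) x
  have hD : Dproj χ j (complexify (schwartzPd i (u k))) =
      ⇑(𝓕⁻ (K i (k + 2) (k + 1) - K i (k + 1) (k + 2)) : 𝓢(E3, ℂ)) := by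
    rw [SchwartzMap.fourierInv_coe, Dproj]
    congr 1
    funext ξ
    rw [sub_apply, hK, hK, hG, hG, ← mul_assoc, ← mul_assoc, rieszSymbol_mul_annulus hχ,
      rieszSymbol_mul_annulus hχ, ← SchwartzMap.fourier_coe,
      fourier_complexify_schwartzPd_eq_vorticity hu]
    ring
  rw [hD, schwartz_fourierInv_sub, sub_apply]
  refine (norm_sub_le _ _).trans ?_
  linarith [hKm i (k + 2) (k + 1) x, hKm i (k + 1) (k + 2) x]

theorem ENNReal.mul_mul_le_add_cube (a b c : ℝ≥0∞) : a * b * c ≤ a ^ 3 + b ^ 3 + c ^ 3 := by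
  have h : a * b * c ≤ max (max a b) c ^ 3 := by
    rw [pow_three', ← pow_two, pow_two]
    gcongr
    · exact (le_max_left _ _).trans (le_max_left _ _)
    · exact (le_max_right _ _).trans (le_max_left _ _)
    · exact le_max_right _ _
  refine h.trans ?_
  rcases max_choice (max a b) c with h1 | h1 <;> rw [h1]
  · rcases max_choice a b with h2 | h2 <;> rw [h2]
    · exact le_self_add.trans le_self_add
    · exact le_add_self.trans le_self_add
  · exact le_add_self

theorem ofReal_abs_vortexStretch_le (u : Fin 3 → 𝓢(E3, ℝ)) {Q : ℝ≥0∞}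
    (h1 : ∀ k, ∫⁻ x, ‖complexify (vorticity u k) x‖ₑ ^ 3 ≤ Q)
    (h2 : ∀ i k, ∫⁻ x, ‖complexify (schwartzPd i (u k)) x‖ₑ ^ 3 ≤ Q) :
    ENNReal.ofReal |vortexStretch u| ≤ 27 * Q := by
  have hm : ∀ f : 𝓢(E3, ℂ), Measurable fun x => ‖f x‖ₑ ^ 3 := fun f =>
    (by have := f.continuous; fun_prop : Continuous fun x => ‖f x‖ₑ ^ 3).measurable
  have hm2 : ∀ f g : 𝓢(E3, ℂ), Measurable fun x => ‖f x‖ₑ ^ 3 + ‖g x‖ₑ ^ 3 := fun f g =>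
    (hm f).add (hm g)
  have hm3 : ∀ f g k : 𝓢(E3, ℂ), Measurable fun x => ‖f x‖ₑ ^ 3 + ‖g x‖ₑ ^ 3 + ‖k x‖ₑ ^ 3 :=
    fun f g k => (hm2 f g).add (hm k)
  have hen : ∀ (f : 𝓢(E3, ℝ)) x, ‖f x‖ₑ = ‖complexify f x‖ₑ := fun f x => by
    rw [complexify_apply, ← ofReal_norm, ← ofReal_norm, Complex.norm_real]
  rw [← Real.norm_eq_abs, ofReal_norm, vortexStretch]
  refine (enorm_integral_le_lintegral_enorm _).trans ?_
  calc _ ≤ ∫⁻ x, ∑ j : Fin 3, ∑ i : Fin 3, (‖complexify (vorticity u i) x‖ₑ ^ 3 +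
        ‖complexify (schwartzPd i (u j)) x‖ₑ ^ 3 + ‖complexify (vorticity u j) x‖ₑ ^ 3) := by
        refine lintegral_mono fun x => ?_
        refine (enorm_sum_le _ _).trans (Finset.sum_le_sum fun j _ => ?_)
        rw [Finset.sum_mul]
        refine (enorm_sum_le _ _).trans (Finset.sum_le_sum fun i _ => ?_)
        rw [← coe_vorticity, ← coe_vorticity, ← coe_schwartzPd, enorm_mul, enorm_mul, hen, hen, hen]
        exact ENNReal.mul_mul_le_add_cube _ _ _
    _ = ∑ j : Fin 3, ∑ i : Fin 3, ((∫⁻ x, ‖complexify (vorticity u i) x‖ₑ ^ 3) +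
        (∫⁻ x, ‖complexify (schwartzPd i (u j)) x‖ₑ ^ 3) +
        ∫⁻ x, ‖complexify (vorticity u j) x‖ₑ ^ 3) := by
        rw [lintegral_finsetSum _ fun j _ => Finset.measurable_sum _ fun i _ => hm3 _ _ _]
        refine Finset.sum_congr rfl fun j _ => ?_
        rw [lintegral_finsetSum _ fun i _ => hm3 _ _ _]
        refine Finset.sum_congr rfl fun i _ => ?_
        rw [lintegral_add_left (hm2 _ _), lintegral_add_left (hm _)]
    _ ≤ ∑ _j : Fin 3, ∑ _i : Fin 3, (Q + Q + Q) := by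
        gcongr
        · exact h1 _
        · exact h2 _ _
        · exact h1 _
    _ = 27 * Q := by
        simp only [Fin.sum_univ_three]
        ring

/-- **Estimate (3.10)**: for `0 < α < 1` there is a constant `C > 0` such that for
every divergence-free Schwartz vector field `u` on `ℝ³` with vorticity `ω = curl u`,
`|∫ ((ω·∇)u)·ω dx| ≤ C (‖∇ω‖_{L²}^{1+α} ‖ω‖_{L²}^{1-α} ‖ω‖_{Ḃ^{-1-α}_{∞,∞}}
+ ‖∇ω‖_{L²}^{α} ‖ω‖_{L²}^{2-α} ‖ω‖_{Ḃ^{-α}_{∞,∞}})`. -/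
theorem vortex_stretch_interpolation_estimate
    (χ : E3 → ℝ) (hχ : IsLPCutoff χ) (α : ℝ) (hα : 0 < α) (hα1 : α < 1) :
    ∃ C : ℝ≥0∞, 0 < C ∧ C < ∞ ∧
      ∀ u : Fin 3 → 𝓢(E3, ℝ), (∀ x, ∑ i : Fin 3, pd i (⇑(u i)) x = 0) →
        ENNReal.ofReal |vortexStretch u| ≤
          C * (gradL2 (curlS u) ^ (1 + α) * vecL2 (curlS u) ^ (1 - α)
                * vecBesovInf χ (-1 - α) (curlS u)
            + gradL2 (curlS u) ^ α * vecL2 (curlS u) ^ (2 - α)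
                * vecBesovInf χ (-α) (curlS u)) := by
  obtain ⟨C, hC, hcube⟩ := exists_lintegral_cube_le hχ hα
  obtain ⟨A, hA, hgrad⟩ := exists_norm_Dproj_velocityGradient_le hχ
  refine ⟨27 * (C * (ENNReal.ofReal (A + 1) * 8)) + 1, by positivity, by finiteness,
    fun u hu => ?_⟩
  set X := gradL2 (curlS u) ^ α * vecL2 (curlS u) ^ (2 - α)
  set B := vecBesovInf χ (-α) (curlS u)
  have hX : X ≠ ∞ := gradL2_rpow_mul_vecL2_rpow_ne_top hα hα1 u
  have hEw : ∀ k, sobolevEnergy α (complexify (vorticity u k)) ≤ X :=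
    sobolevEnergy_vorticity_le hα hα1 u
  have hEg : ∀ i k, sobolevEnergy α (complexify (schwartzPd i (u k))) ≤ 8 * X := fun i k =>
    calc _ ≤ 4 * (X + X) := (sobolevEnergy_velocityGradient_le α hu i k).trans (by
          gcongr <;> exact hEw _)
      _ = 8 * X := by ring
  have hBw : ∀ k (j : ℤ) (x : E3), ‖Dproj χ j (complexify (vorticity u k)) x‖ₑ ≤
      ENNReal.ofReal (((2 : ℝ) ^ α) ^ j) * B := fun k j x => enorm_Dproj_vorticity_le hχ α u k j x
  have hBg : ∀ i k (j : ℤ) (x : E3), ‖Dproj χ j (complexify (schwartzPd i (u k))) x‖ₑ ≤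
      ENNReal.ofReal (((2 : ℝ) ^ α) ^ j) * (ENNReal.ofReal (A + 1) * B) := by
    intro i k j x
    have hj : 0 < ((2 : ℝ) ^ α) ^ j := by positivity
    rcases eq_or_ne B ∞ with hB | hB
    · rw [hB, ENNReal.mul_top (by simpa using by positivity), ENNReal.mul_top (by simpa using hj)]
      exact le_top
    have hb : 0 ≤ B.toReal := ENNReal.toReal_nonneg
    have h := hgrad u hu j (((2 : ℝ) ^ α) ^ j * B.toReal) (fun k x => by
      have h1 := hBw k j x
      rwa [← ofReal_norm, ← ENNReal.ofReal_toReal hB, ← ENNReal.ofReal_mul hj.le,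
        ENNReal.ofReal_le_ofReal_iff (by positivity)] at h1) i k x
    rw [← ofReal_norm, ← ENNReal.ofReal_toReal hB, ← ENNReal.ofReal_mul (by positivity),
      ← ENNReal.ofReal_mul hj.le]
    refine ENNReal.ofReal_le_ofReal (h.trans ?_)
    have h2 : 0 ≤ ((2 : ℝ) ^ α) ^ j * B.toReal := by positivity
    linarith
  have h1A : 1 ≤ ENNReal.ofReal (A + 1) := by
    rw [ENNReal.one_le_ofReal]
    linarith
  have h := ofReal_abs_vortexStretch_le u (Q := C * (ENNReal.ofReal (A + 1) * B * (8 * X)))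
    (fun k => (hcube _ B ((hEw k).trans_lt hX.lt_top).ne (hBw k)).trans (by
      gcongr
      · exact le_mul_of_one_le_left zero_le h1A
      · exact (hEw k).trans (le_mul_of_one_le_left zero_le (by norm_num))))
    (fun i k => (hcube _ _ ((hEg i k).trans_lt (by finiteness)).ne (hBg i k)).trans (by
      gcongr
      exact hEg i k))
  calc _ ≤ 27 * (C * (ENNReal.ofReal (A + 1) * B * (8 * X))) := h
    _ = 27 * (C * (ENNReal.ofReal (A + 1) * 8)) * (X * B) := by ring
    _ ≤ _ := mul_le_mul' le_self_add le_add_self
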